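/- The plane Π₂ = {(A₁, p₁, A₂, p₂) : A₁ = p₁ = 0} is invariant under the two-mode nanobeam system: if A₁, p₁, A₂, p₂ : ℝ → ℝ are differentiable, satisfy A₁' = p₁, p₁' = −2A₁(α + A₁² + 4A₂²), A₂' = p₂, p₂' = −8A₂(β + A₁² + 4A₂²) at every time t, and A₁(t₀) = p₁(t₀) = 0 for some t₀, then A₁(t) = 0 and p₁(t) = 0 for all t ∈ ℝ. -/

import Mathlib

/-!
Along a solution, `(A₁, p₁)` solves a *linear* system `A₁' = p₁`, `p₁' = q A₁` whose coefficient
`q = -2 (α + A₁² + 4 A₂²)` is a continuous function of time. The energy `E = A₁² + p₁²` therefore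
satisfies `|E'| = |2 A₁ p₁ (1 + q)| ≤ c E` with `c = 1 + |q|`. If `G` is an antiderivative of `c`,
then `E exp (-G)` is antitone and `E exp G` is monotone. Since `E ≥ 0` vanishes at `t₀`, the first
function forces `E = 0` after `t₀` and the second forces it before `t₀`. This argument is
`eq_zero_of_linear_second_order`.
-/

/-- A solution of the linear equation `x'' = q x` with continuous `q` that vanishes together with
its derivative at one time vanishes at all times (global Grönwall argument). -/
theorem eq_zero_of_linear_second_order {x y q : ℝ → ℝ} (hq : Continuous q)
    (hx : ∀ t, HasDerivAt x (y t) t) (hy : ∀ t, HasDerivAt y (q t * x t) t)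
    {t₀ : ℝ} (hx₀ : x t₀ = 0) (hy₀ : y t₀ = 0) (t : ℝ) : x t = 0 ∧ y t = 0 := by
  have hc : Continuous fun s => 1 + |q s| := by fun_prop
  obtain ⟨G, hG⟩ : ∃ G : ℝ → ℝ, ∀ s, HasDerivAt G (1 + |q s|) s :=
    ⟨fun s => ∫ r in (0 : ℝ)..s, (1 + |q r|),
      fun s => (hc.integral_hasStrictDerivAt 0 s).hasDerivAt⟩
  have hE : ∀ s, HasDerivAt (fun r => x r ^ 2 + y r ^ 2) (2 * x s * y s * (1 + q s)) s := by
    intro s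
    refine (((hx s).pow 2).add ((hy s).pow 2)).congr_deriv ?_
    push_cast
    ring
  have hbound : ∀ s, |2 * x s * y s * (1 + q s)| ≤ (1 + |q s|) * (x s ^ 2 + y s ^ 2) := by
    intro s
    rw [abs_mul, mul_comm]
    have h1 : |1 + q s| ≤ 1 + |q s| := by simpa using abs_add_le 1 (q s)
    have h2 : |2 * x s * y s| ≤ x s ^ 2 + y s ^ 2 :=
      abs_le.2 ⟨by nlinarith [sq_nonneg (x s + y s)], by nlinarith [sq_nonneg (x s - y s)]⟩
    gcongr
  have hanti : Antitone fun r => (x r ^ 2 + y r ^ 2) * Real.exp (-G r) := by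
    refine antitone_of_hasDerivAt_nonpos (fun s => (hE s).mul (hG s).neg.exp) fun s => ?_
    have h := (abs_le.1 (hbound s)).2
    have he := Real.exp_pos (-G s)
    simp only [Pi.zero_apply, Pi.neg_apply]
    nlinarith [mul_nonneg (sub_nonneg.2 h) he.le]
  have hmono : Monotone fun r => (x r ^ 2 + y r ^ 2) * Real.exp (G r) := by
    refine monotone_of_hasDerivAt_nonneg (fun s => (hE s).mul (hG s).exp) fun s => ?_
    have h := (abs_le.1 (hbound s)).1
    have he := Real.exp_pos (G s)
    simp only [Pi.zero_apply, Pi.neg_apply]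
    nlinarith [mul_nonneg (sub_nonneg.2 h) he.le]
  have hle : x t ^ 2 + y t ^ 2 ≤ 0 := by
    rcases le_total t₀ t with h | h
    · have := hanti h
      simp only [hx₀, hy₀] at this
      exact nonpos_of_mul_nonpos_left (this.trans_eq (by simp)) (Real.exp_pos _)
    · have := hmono h
      simp only [hx₀, hy₀] at this
      exact nonpos_of_mul_nonpos_left (this.trans_eq (by simp)) (Real.exp_pos _)
  constructor <;> nlinarith [sq_nonneg (x t), sq_nonneg (y t)]


/-- The plane Π₂ = {A₁ = p₁ = 0} is invariant under the two-mode nanobeam system. -/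
theorem pi2_invariant (α β : ℝ) (A₁ p₁ A₂ p₂ : ℝ → ℝ)
    (h₁ : ∀ t : ℝ, HasDerivAt A₁ (p₁ t) t)
    (h₂ : ∀ t : ℝ, HasDerivAt p₁ (-2 * A₁ t * (α + (A₁ t) ^ 2 + 4 * (A₂ t) ^ 2)) t)
    (h₃ : ∀ t : ℝ, HasDerivAt A₂ (p₂ t) t)
    (h₄ : ∀ t : ℝ, HasDerivAt p₂ (-8 * A₂ t * (β + (A₁ t) ^ 2 + 4 * (A₂ t) ^ 2)) t)
    (t₀ : ℝ) (hA : A₁ t₀ = 0) (hp : p₁ t₀ = 0) :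
    ∀ t : ℝ, A₁ t = 0 ∧ p₁ t = 0 := by
  have hA₁ : Continuous A₁ := continuous_iff_continuousAt.2 fun t => (h₁ t).continuousAt
  have hA₂ : Continuous A₂ := continuous_iff_continuousAt.2 fun t => (h₃ t).continuousAt
  have hq : Continuous fun t => -2 * (α + (A₁ t) ^ 2 + 4 * (A₂ t) ^ 2) := by fun_prop
  exact eq_zero_of_linear_second_order hq h₁ (fun t => (h₂ t).congr_deriv (by ring)) hA hp
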